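/- Let Â, B̂ : ℝ³ → M_n(ℂ) be smooth maps satisfying ∂_ξB̂ = ∂_yÂ and ∂_ηÂ − ∂_yB̂ + [Â,B̂] = 0, and suppose g : ℝ³ → GL(n,ℂ) is a smooth map with ∂_yg = Âg and ∂_ηg = B̂g. Then g solves the Ward equation with θ = 0: ∂_t((∂_tg)g⁻¹) − ∂_x((∂_xg)g⁻¹) − ∂_y((∂_yg)g⁻¹) − [(∂_tg)g⁻¹, (∂_xg)g⁻¹] = 0. -/

import Mathlib

open Matrix Complex
open scoped Matrix ComplexConjugate

attribute [local instance] Matrix.normedAddCommGroup Matrix.normedSpace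

noncomputable section

/-- `n × n` complex matrices. -/
abbrev Mat (n : ℕ) := Matrix (Fin n) (Fin n) ℂ

/-- Space-time `ℝ³` with coordinates `(x, y, t)`. -/
abbrev P3 : Type := ℝ × ℝ × ℝ

section PartialDerivatives

variable {W : Type*} [NormedAddCommGroup W] [NormedSpace ℝ W]

/-- Partial derivative in `x`. -/
def pdx (f : P3 → W) (p : P3) : W := deriv (fun s => f (s, p.2.1, p.2.2)) p.1

/-- Partial derivative in `y`. -/
def pdy (f : P3 → W) (p : P3) : W := deriv (fun s => f (p.1, s, p.2.2)) p.2.1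

/-- Partial derivative in `t`. -/
def pdt (f : P3 → W) (p : P3) : W := deriv (fun s => f (p.1, p.2.1, s)) p.2.2

/-- Light-cone derivative `∂_ξ = ∂_t + ∂_x`. -/
def pdxi (f : P3 → W) (p : P3) : W := pdt f p + pdx f p

/-- Light-cone derivative `∂_η = ∂_t − ∂_x`. -/
def pdeta (f : P3 → W) (p : P3) : W := pdt f p - pdx f p

end PartialDerivatives

/-- `∂_z = ½(∂_x − i ∂_y)`. -/
def pdz {n : ℕ} (f : P3 → Mat n) (p : P3) : Mat n :=
  (2⁻¹ : ℂ) • (pdx f p - Complex.I • pdy f p)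

/-- `∂_z̄ = ½(∂_x + i ∂_y)`. -/
def pdzbar {n : ℕ} (f : P3 → Mat n) (p : P3) : Mat n :=
  (2⁻¹ : ℂ) • (pdx f p + Complex.I • pdy f p)

/-- Commutator `[X, Y] = XY − YX`. -/
def brk {n : ℕ} (X Y : Mat n) : Mat n := X * Y - Y * X

/-- Anti-Hermitian-valued map. -/
def SkewHerm {n : ℕ} (f : P3 → Mat n) : Prop := ∀ p : P3, (f p)ᴴ = -(f p)

/-- The space-time monopole equation `F_{xy} = −∇_tφ`, `F_{xt} = −∇_yφ`, `F_{yt} = ∇_xφ`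
for the connection `(Ax, Ay, At)` and Higgs field `Ph`, at the point `p`. -/
def MonopoleEqAt {n : ℕ} (Ax Ay At Ph : P3 → Mat n) (p : P3) : Prop :=
  (-(pdx Ay p) + pdy Ax p + brk (Ax p) (Ay p) = -(pdt Ph p - brk (At p) (Ph p))) ∧
  (-(pdx At p) + pdt Ax p + brk (Ax p) (At p) = -(pdy Ph p - brk (Ay p) (Ph p))) ∧
  (-(pdy At p) + pdt Ay p + brk (Ay p) (At p) = pdx Ph p - brk (Ax p) (Ph p))

/-- The space-time monopole equation on all of `ℝ³`. -/
def MonopoleEq {n : ℕ} (Ax Ay At Ph : P3 → Mat n) : Prop :=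
  ∀ p : P3, MonopoleEqAt Ax Ay At Ph p

/-- `E` solves the `μ`-linear system for `(A, φ)`. -/
def SolvesMu {n : ℕ} (Ax Ay At Ph : P3 → Mat n) (μ : ℂ) (E : P3 → Mat n) : Prop :=
  ∀ p : P3,
    (2⁻¹ : ℂ) • pdt E p + μ • pdz E p =
      ((2⁻¹ : ℂ) • (At p + Complex.I • Ph p) +
        μ • ((2⁻¹ : ℂ) • (Ax p - Complex.I • Ay p))) * E p ∧
    (2⁻¹ : ℂ) • pdt E p + μ⁻¹ • pdzbar E p =
      ((2⁻¹ : ℂ) • (At p - Complex.I • Ph p) +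
        μ⁻¹ • ((2⁻¹ : ℂ) • (Ax p + Complex.I • Ay p))) * E p

/-- `F` solves the `λ`-linear system for `(A, φ)`. -/
def SolvesLam {n : ℕ} (Ax Ay At Ph : P3 → Mat n) (lm : ℂ) (F : P3 → Mat n) : Prop :=
  ∀ p : P3,
    lm • pdxi F p - pdy F p = (lm • (At p + Ax p) - (Ay p + Ph p)) * F p ∧
    lm⁻¹ • pdeta F p - pdy F p = (lm⁻¹ • (At p - Ax p) - (Ay p - Ph p)) * F p

/-!
The logarithmic derivatives `(∂_v g) g⁻¹` form a flat connection because second derivatives of `g`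
commute: `∂_t((∂_x g) g⁻¹) − ∂_x((∂_t g) g⁻¹) = [(∂_t g) g⁻¹, (∂_x g) g⁻¹]`. Substituting this for
the commutator turns the left-hand side of the Ward equation into
`∂_ξ((∂_η g) g⁻¹) − ∂_y((∂_y g) g⁻¹)`, which is `∂_ξ B̂ − ∂_y Â`.
-/

section Calculus

variable {𝕜 E : Type*} [NontriviallyNormedField 𝕜] [NormedAddCommGroup E] [NormedSpace 𝕜 E]

section SecondDerivative

variable {F : Type*} [NormedAddCommGroup F] [NormedSpace 𝕜 F] {f : E → F} {p : E}

theorem fderiv_fderiv_apply (hf : DifferentiableAt 𝕜 (fderiv 𝕜 f) p) (v w : E) :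
    fderiv 𝕜 (fun q => fderiv 𝕜 f q v) p w = fderiv 𝕜 (fderiv 𝕜 f) p w v := by
  simp [fderiv_clm_apply hf (differentiableAt_const v)]

theorem fderiv_fderiv_apply_comm (hf : ContDiffAt 𝕜 (minSmoothness 𝕜 2) f p) (v w : E) :
    fderiv 𝕜 (fun q => fderiv 𝕜 f q v) p w = fderiv 𝕜 (fun q => fderiv 𝕜 f q w) p v := by
  have hf_fderiv : DifferentiableAt 𝕜 (fderiv 𝕜 f) p :=
    ((hf.of_le le_minSmoothness).fderiv_right (m := 1) le_rfl).differentiableAt one_ne_zero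
  rw [fderiv_fderiv_apply hf_fderiv, fderiv_fderiv_apply hf_fderiv]
  exact hf.isSymmSndFDerivAt le_rfl w v

end SecondDerivative

variable {ι 𝔸 : Type*} [Fintype ι]

section NormedRing

variable [NormedRing 𝔸] [NormedAlgebra 𝕜 𝔸] {f h : E → Matrix ι ι 𝔸} {p : E}

-- Differentiation of matrix-valued maps depends on the topology of the matrices only, so the proofs
-- may replace the sup norm of the entries by the submultiplicative `ℓ^∞` operator norm.
theorem differentiableAt_matrix_mul (hf : DifferentiableAt 𝕜 f p) (hh : DifferentiableAt 𝕜 h p) :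
    DifferentiableAt 𝕜 (fun q => f q * h q) p := by
  classical
  let : NormedRing (Matrix ι ι 𝔸) := Matrix.linftyOpNormedRing
  let : NormedAlgebra 𝕜 (Matrix ι ι 𝔸) := Matrix.linftyOpNormedAlgebra
  exact hf.mul hh

theorem fderiv_matrix_mul_apply (hf : DifferentiableAt 𝕜 f p) (hh : DifferentiableAt 𝕜 h p)
    (v : E) :
    fderiv 𝕜 (fun q => f q * h q) p v = fderiv 𝕜 f p v * h p + f p * fderiv 𝕜 h p v := by
  classical
  let : NormedRing (Matrix ι ι 𝔸) := Matrix.linftyOpNormedRing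
  let : NormedAlgebra 𝕜 (Matrix ι ι 𝔸) := Matrix.linftyOpNormedAlgebra
  have product_rule := (hf.hasFDerivAt.mul' hh.hasFDerivAt).fderiv
  rw [add_comm]
  exact DFunLike.congr_fun product_rule v

theorem fderiv_sub_fderiv_eq_lie_of_fderiv_eq_mul [DecidableEq ι]
    {g A B : E → Matrix ι ι 𝔸} {v w : E}
    (hg : ContDiffAt 𝕜 (minSmoothness 𝕜 2) g p) (hu : IsUnit (g p))
    (hA : DifferentiableAt 𝕜 A p) (hB : DifferentiableAt 𝕜 B p)
    (hgv : ∀ q, fderiv 𝕜 g q v = A q * g q) (hgw : ∀ q, fderiv 𝕜 g q w = B q * g q) :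
    fderiv 𝕜 A p w - fderiv 𝕜 B p v = ⁅B p, A p⁆ := by
  have hg_diff : DifferentiableAt 𝕜 g p :=
    (hg.of_le le_minSmoothness).differentiableAt two_ne_zero
  have mixed_partials :
      fderiv 𝕜 (fun q => fderiv 𝕜 g q v) p w = fderiv 𝕜 (fun q => fderiv 𝕜 g q w) p v :=
    fderiv_fderiv_apply_comm hg v w
  simp only [hgv, hgw] at mixed_partials
  rw [fderiv_matrix_mul_apply hA hg_diff, fderiv_matrix_mul_apply hB hg_diff, hgv, hgw,
    ← mul_assoc, ← mul_assoc, ← add_mul, ← add_mul] at mixed_partials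
  rw [Ring.lie_def, sub_eq_sub_iff_add_eq_add, add_comm (B p * A p)]
  exact hu.mul_right_cancel mixed_partials

end NormedRing

variable [DecidableEq ι] [NormedCommRing 𝔸] [NormedAlgebra 𝕜 𝔸] [CompleteSpace 𝔸]
  {g : E → Matrix ι ι 𝔸}

theorem differentiableAt_matrix_inv {p : E} (hg : DifferentiableAt 𝕜 g p) (hu : IsUnit (g p)) :
    DifferentiableAt 𝕜 (fun q => (g q)⁻¹) p := by
  let : NormedRing (Matrix ι ι 𝔸) := Matrix.linftyOpNormedRing
  let : NormedAlgebra 𝕜 (Matrix ι ι 𝔸) := Matrix.linftyOpNormedAlgebra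
  have : HasSummableGeomSeries (Matrix ι ι 𝔸) :=
    @instHasSummableGeomSeriesOfCompleteSpace _ _ (inferInstanceAs (CompleteSpace (ι → ι → 𝔸)))
  simp only [Matrix.nonsing_inv_eq_ringInverse]
  exact (differentiableAt_inverse hu).comp p hg

theorem differentiableAt_fderiv_mul_inv {p : E} (hg : ContDiffAt 𝕜 2 g p) (hu : IsUnit (g p))
    (v : E) : DifferentiableAt 𝕜 (fun q => fderiv 𝕜 g q v * (g q)⁻¹) p := by
  have hg_fderiv : DifferentiableAt 𝕜 (fderiv 𝕜 g) p :=
    (hg.fderiv_right (m := 1) le_rfl).differentiableAt one_ne_zero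
  exact differentiableAt_matrix_mul (hg_fderiv.clm_apply (differentiableAt_const v))
    (differentiableAt_matrix_inv (hg.differentiableAt two_ne_zero) hu)

theorem fderiv_fderiv_mul_inv_sub_eq_lie (hg : ContDiff 𝕜 (minSmoothness 𝕜 2) g)
    (hu : ∀ q, IsUnit (g q)) (v w p : E) :
    fderiv 𝕜 (fun q => fderiv 𝕜 g q v * (g q)⁻¹) p w -
        fderiv 𝕜 (fun q => fderiv 𝕜 g q w * (g q)⁻¹) p v =
      ⁅fderiv 𝕜 g p w * (g p)⁻¹, fderiv 𝕜 g p v * (g p)⁻¹⁆ := by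
  have hg_two : ContDiffAt 𝕜 2 g p := hg.contDiffAt.of_le le_minSmoothness
  have fderiv_eq (a q : E) : fderiv 𝕜 g q a = fderiv 𝕜 g q a * (g q)⁻¹ * g q :=
    (Matrix.nonsing_inv_mul_cancel_right _ _ ((Matrix.isUnit_iff_isUnit_det _).1 (hu q))).symm
  exact fderiv_sub_fderiv_eq_lie_of_fderiv_eq_mul hg.contDiffAt (hu p)
    (differentiableAt_fderiv_mul_inv hg_two (hu p) v)
    (differentiableAt_fderiv_mul_inv hg_two (hu p) w) (fderiv_eq v) (fderiv_eq w)

end Calculus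

section PartialDerivatives

variable {W : Type*} [NormedAddCommGroup W] [NormedSpace ℝ W] {f h : P3 → W} {p : P3}

theorem pdx_eq_fderiv (hf : DifferentiableAt ℝ f p) : pdx f p = fderiv ℝ f p (1, 0, 0) :=
  (hf.hasFDerivAt.comp_hasDerivAt p.1 ((hasDerivAt_id _).prodMk
    ((hasDerivAt_const _ p.2.1).prodMk (hasDerivAt_const _ p.2.2)))).deriv

theorem pdt_eq_fderiv (hf : DifferentiableAt ℝ f p) : pdt f p = fderiv ℝ f p (0, 0, 1) :=
  (hf.hasFDerivAt.comp_hasDerivAt p.2.2 ((hasDerivAt_const _ p.1).prodMk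
    ((hasDerivAt_const _ p.2.1).prodMk (hasDerivAt_id _)))).deriv

theorem pdxi_fun_sub (hf : DifferentiableAt ℝ f p) (hh : DifferentiableAt ℝ h p) :
    pdxi (fun q => f q - h q) p = pdt f p - pdt h p + (pdx f p - pdx h p) := by
  have hfh : DifferentiableAt ℝ (fun q => f q - h q) p := hf.fun_sub hh
  rw [pdxi, pdt_eq_fderiv hfh, pdx_eq_fderiv hfh, fderiv_fun_sub hf hh, _root_.sub_apply,
    _root_.sub_apply, pdt_eq_fderiv hf, pdt_eq_fderiv hh, pdx_eq_fderiv hf, pdx_eq_fderiv hh]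

end PartialDerivatives

section Ward

variable {ι 𝔸 : Type*} [Fintype ι] [DecidableEq ι] [NormedCommRing 𝔸] [NormedAlgebra ℝ 𝔸]
  [CompleteSpace 𝔸] {g : P3 → Matrix ι ι 𝔸}

theorem differentiableAt_pdx_mul_inv (hg : ContDiff ℝ 2 g) {p : P3} (hu : IsUnit (g p)) :
    DifferentiableAt ℝ (fun q => pdx g q * (g q)⁻¹) p := by
  simp only [fun q => pdx_eq_fderiv (hg.differentiable two_ne_zero q)]
  exact differentiableAt_fderiv_mul_inv hg.contDiffAt hu (1, 0, 0)

theorem differentiableAt_pdt_mul_inv (hg : ContDiff ℝ 2 g) {p : P3} (hu : IsUnit (g p)) :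
    DifferentiableAt ℝ (fun q => pdt g q * (g q)⁻¹) p := by
  simp only [fun q => pdt_eq_fderiv (hg.differentiable two_ne_zero q)]
  exact differentiableAt_fderiv_mul_inv hg.contDiffAt hu (0, 0, 1)

theorem pdt_pdx_mul_inv_sub_eq_lie (hg : ContDiff ℝ 2 g) (hu : ∀ q, IsUnit (g q)) (p : P3) :
    pdt (fun q => pdx g q * (g q)⁻¹) p - pdx (fun q => pdt g q * (g q)⁻¹) p =
      ⁅pdt g p * (g p)⁻¹, pdx g p * (g p)⁻¹⁆ := by
  rw [pdt_eq_fderiv (differentiableAt_pdx_mul_inv hg (hu p)),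
    pdx_eq_fderiv (differentiableAt_pdt_mul_inv hg (hu p))]
  simp only [fun q => pdx_eq_fderiv (hg.differentiable two_ne_zero q),
    fun q => pdt_eq_fderiv (hg.differentiable two_ne_zero q)]
  exact fderiv_fderiv_mul_inv_sub_eq_lie (by simpa using hg) hu (1, 0, 0) (0, 0, 1) p

theorem pdxi_pdeta_mul_inv (hg : ContDiff ℝ 2 g) (hu : ∀ q, IsUnit (g q)) (p : P3) :
    pdxi (fun q => pdeta g q * (g q)⁻¹) p =
      pdt (fun q => pdt g q * (g q)⁻¹) p - pdx (fun q => pdx g q * (g q)⁻¹) p -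
        ⁅pdt g p * (g p)⁻¹, pdx g p * (g p)⁻¹⁆ := by
  simp only [pdeta, sub_mul]
  rw [pdxi_fun_sub (differentiableAt_pdt_mul_inv hg (hu p))
    (differentiableAt_pdx_mul_inv hg (hu p)), ← pdt_pdx_mul_inv_sub_eq_lie hg hu p]
  abel

theorem ward_equation_theta_zero_general {A B : P3 → Matrix ι ι 𝔸}
    (hAB : ∀ p, pdxi B p = pdy A p) (hg : ContDiff ℝ 2 g) (hu : ∀ p, IsUnit (g p))
    (hgy : ∀ p, pdy g p = A p * g p) (hgη : ∀ p, pdeta g p = B p * g p) (p : P3) :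
    pdt (fun q => pdt g q * (g q)⁻¹) p - pdx (fun q => pdx g q * (g q)⁻¹) p -
        pdy (fun q => pdy g q * (g q)⁻¹) p -
        ⁅pdt g p * (g p)⁻¹, pdx g p * (g p)⁻¹⁆ = 0 := by
  have mul_g_mul_inv (C : P3 → Matrix ι ι 𝔸) (q : P3) : C q * g q * (g q)⁻¹ = C q :=
    Matrix.mul_nonsing_inv_cancel_right _ _ ((Matrix.isUnit_iff_isUnit_det _).1 (hu q))
  have pdxi_B := pdxi_pdeta_mul_inv hg hu p
  simp only [hgη, mul_g_mul_inv] at pdxi_B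
  simp only [hgy, mul_g_mul_inv]
  rw [sub_right_comm, ← pdxi_B, hAB, sub_self]

end Ward

/-- If `∂_ξ B̂ = ∂_y Â`, `∂_η Â − ∂_y B̂ + [Â, B̂] = 0`, and
`g` satisfies `∂_y g = Â g`, `∂_η g = B̂ g`, then `g` solves the Ward equation with `θ = 0`. -/
theorem ward_equation_theta_zero {n : ℕ} (Ah Bh : P3 → Mat n)
    (hAs : ContDiff ℝ (⊤ : ℕ∞) Ah) (hBs : ContDiff ℝ (⊤ : ℕ∞) Bh)
    (h1 : ∀ p : P3, pdxi Bh p = pdy Ah p)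
    (h2 : ∀ p : P3, pdeta Ah p - pdy Bh p + brk (Ah p) (Bh p) = 0)
    (g : P3 → Mat n) (hgs : ContDiff ℝ (⊤ : ℕ∞) g) (hgl : ∀ p : P3, IsUnit (g p))
    (hgy : ∀ p : P3, pdy g p = Ah p * g p)
    (hge : ∀ p : P3, pdeta g p = Bh p * g p) :
    ∀ p : P3,
      pdt (fun q => pdt g q * (g q)⁻¹) p - pdx (fun q => pdx g q * (g q)⁻¹) p -
        pdy (fun q => pdy g q * (g q)⁻¹) p -
        brk (pdt g p * (g p)⁻¹) (pdx g p * (g p)⁻¹) = 0 := by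
  exact ward_equation_theta_zero_general h1 (contDiff_infty.1 hgs 2) hgl hgy hge
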